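/- Let N be a positive integer, U an N×N complex unitary matrix, and v ∈ ℂ^N a unit vector. Suppose e^{iθ} is a simple eigenvalue of U with unit eigenvector u (i.e. U u = e^{iθ} u, |u| = 1). Let η > 0 and let λ : (1−η, 1] → ℂ be a function such that λ(1) = e^{iθ}, λ(t) is an eigenvalue of G(t) = U·A(t) for every t ∈ (1−η, 1], and λ is differentiable at t = 1 (one-sided). Then λ'(1) = e^{iθ} · |⟨u, v⟩|². -/

import Mathlib

open Matrix

noncomputable section

/-- The rank-one multiplicative perturbation `A(t) = I_N - (1-t) v v^*`. -/
def Apert {N : ℕ} (v : Fin N → ℂ) (t : ℝ) : Matrix (Fin N) (Fin N) ℂ :=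
  1 - ((1 : ℂ) - (t : ℂ)) • vecMulVec v (star v)

/-- The `UA` model `G(t) = U · A(t)`. -/
def Gpert {N : ℕ} (U : Matrix (Fin N) (Fin N) ℂ) (v : Fin N → ℂ) (t : ℝ) :
    Matrix (Fin N) (Fin N) ℂ :=
  U * Apert v t

/-!
Differentiate the identity `det (λ(t) - G(t)) = 0` at `t = 1` by Jacobi's formula: with
`B = λ(1) - U`, this gives `tr (adj B * (λ'(1) - G'(1))) = 0`. Whenever `B u = 0` and `wᵀ B = 0`,
one has `(wᵀ u) adj B = tr (adj B) u wᵀ`, so the trace condition collapses to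
`tr (adj B) (wᵀ u λ'(1) - wᵀ G'(1) u) = 0`. The factor `tr (adj B)` is the derivative of the
characteristic polynomial of `U` at `λ(1)`, which is nonzero for a simple eigenvalue. Normality of
`U` makes `wᵀ = u^*` a left eigenvector, and `G'(1) = U v v^*`.
-/

section Jacobi

variable {𝕜 R K n : Type*} [NontriviallyNormedField 𝕜] [Fintype n] [DecidableEq n]

lemma sum_det_updateCol_eq_trace_adjugate_mul [CommRing R] (A B : Matrix n n R) :
    ∑ j, (A.updateCol j (Bᵀ j)).det = (A.adjugate * B).trace := by
  simp only [← cramer_apply, cramer_eq_adjugate_mulVec, trace, diag_apply, mul_apply, mulVec,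
    dotProduct, transpose_apply]

theorem hasDerivWithinAt_det [NormedCommRing R] [NormedAlgebra 𝕜 R]
    {M : 𝕜 → Matrix n n R} {M' : Matrix n n R} {s : Set 𝕜} {t : 𝕜}
    (hM : ∀ i j, HasDerivWithinAt (fun x ↦ M x i j) (M' i j) s t) :
    HasDerivWithinAt (fun x ↦ (M x).det) ((M t).adjugate * M').trace s t := by
  have hLeibniz : HasDerivWithinAt (fun x ↦ (M x).det)
      (∑ σ : Equiv.Perm n, (Equiv.Perm.sign σ : ℤ) •
        ∑ j, (∏ i ∈ Finset.univ.erase j, M t (σ i) i) • M' (σ j) j) s t := by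
    simp only [det_apply]
    exact HasDerivWithinAt.fun_sum fun σ _ ↦
      (HasDerivWithinAt.fun_finsetProd fun i _ ↦ hM (σ i) i).const_smul _
  convert hLeibniz using 1
  simp only [← sum_det_updateCol_eq_trace_adjugate_mul, det_apply, Finset.smul_sum]
  rw [Finset.sum_comm]
  refine Finset.sum_congr rfl fun σ _ ↦ Finset.sum_congr rfl fun j _ ↦ ?_
  rw [← Finset.mul_prod_erase _ _ (Finset.mem_univ j), updateCol_self, transpose_apply,
    smul_eq_mul, mul_comm]
  congr 2
  exact Finset.prod_congr rfl fun i hi ↦ updateCol_ne (Finset.ne_of_mem_erase hi)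

theorem hasDerivWithinAt_eval_charpoly [NormedCommRing R] [NormedAlgebra 𝕜 R]
    {M : 𝕜 → Matrix n n R} {M' : Matrix n n R} {l : 𝕜 → R} {l' : R} {s : Set 𝕜} {t : 𝕜}
    (hM : ∀ i j, HasDerivWithinAt (fun x ↦ M x i j) (M' i j) s t)
    (hl : HasDerivWithinAt l l' s t) :
    HasDerivWithinAt (fun x ↦ (M x).charpoly.eval (l x))
      ((scalar n (l t) - M t).adjugate * (scalar n l' - M')).trace s t := by
  simp only [eval_charpoly]
  refine hasDerivWithinAt_det fun i j ↦ ?_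
  rcases eq_or_ne i j with rfl | hij
  · simpa only [Matrix.sub_apply, scalar_apply, diagonal_apply_eq] using hl.fun_sub (hM i i)
  · simpa only [Matrix.sub_apply, scalar_apply, diagonal_apply_ne _ hij, zero_sub] using
      (hM i j).fun_neg

theorem eval_derivative_charpoly [NontriviallyNormedField K] (A : Matrix n n K) (c : K) :
    A.charpoly.derivative.eval c = (scalar n c - A).adjugate.trace := by
  have hderiv := hasDerivWithinAt_eval_charpoly (M := fun _ ↦ A) (M' := 0)
    (fun i j ↦ hasDerivWithinAt_const c Set.univ (A i j)) (hasDerivWithinAt_id c Set.univ)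
  simpa using (A.charpoly.hasDerivAt c).unique (hderiv.hasDerivAt Filter.univ_mem)

end Jacobi

lemma updateCol_eq_add_vecMulVec_single {R m n : Type*} [NonAssocRing R] [DecidableEq n]
    (A : Matrix m n R) (j : n) (b : m → R) :
    A.updateCol j b = A + vecMulVec (b - A.col j) (Pi.single j 1) := by
  ext k l
  rcases eq_or_ne l j with rfl | hlj
  · simp [vecMulVec_apply]
  · simp [vecMulVec_apply, hlj]

lemma updateCol_updateCol_col_eq_submatrix_swap {R m n : Type*} [DecidableEq n]
    (A : Matrix m n R) (b : m → R) {i j : n} (hij : i ≠ j) :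
    (A.updateCol j b).updateCol i (A.col j) =
      (A.updateCol i b).submatrix id (Equiv.swap i j) := by
  ext k l
  rcases eq_or_ne l i with rfl | hli
  · simp [hij.symm]
  rcases eq_or_ne l j with rfl | hlj
  · simp [hli]
  · simp [hli, hlj, Equiv.swap_apply_of_ne_of_ne hli hlj]

section Adjugate

variable {R n : Type*} [CommRing R] [Fintype n] [DecidableEq n] {A : Matrix n n R} {u w : n → R}

lemma mul_cramer_comm_of_mulVec_eq_zero (hu : A *ᵥ u = 0) (b : n → R) (i j : n) :
    u i * A.cramer b j = u j * A.cramer b i := by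
  rcases eq_or_ne i j with rfl | hij
  · rfl
  have hAu : A.updateCol j b *ᵥ u = u j • (b - A.col j) := by
    rw [updateCol_eq_add_vecMulVec_single, add_mulVec, hu, zero_add, vecMulVec_mulVec,
      single_one_dotProduct, op_smul_eq_smul]
  have hrepeat : (A.updateCol j b).cramer b i = 0 := by
    rw [cramer_apply]
    exact det_zero_of_column_eq hij fun k ↦ by simp [updateCol_apply]
  have hswap : (A.updateCol j b).cramer (A.col j) i = -A.cramer b i := by
    rw [cramer_apply, cramer_apply, updateCol_updateCol_col_eq_submatrix_swap A b hij,
      det_permute', Equiv.Perm.sign_swap hij]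
    simp
  -- With `B = A.updateCol j b`, evaluate `adj B *ᵥ (B *ᵥ u)` via `adj B * B` and via `B *ᵥ u`.
  calc u i * A.cramer b j = ((A.updateCol j b).adjugate *ᵥ (A.updateCol j b *ᵥ u)) i := by
        rw [mulVec_mulVec, adjugate_mul, smul_mulVec, one_mulVec, Pi.smul_apply, smul_eq_mul,
          cramer_apply, mul_comm]
    _ = u j * ((A.updateCol j b).cramer b i - (A.updateCol j b).cramer (A.col j) i) := by
        rw [hAu, ← cramer_eq_adjugate_mulVec, map_smul, map_sub]; rfl
    _ = u j * A.cramer b i := by rw [hrepeat, hswap, zero_sub, neg_neg]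

lemma mul_adjugate_comm_of_mulVec_eq_zero (hu : A *ᵥ u = 0) (i j k : n) :
    u i * A.adjugate j k = u j * A.adjugate i k := by
  simpa [cramer_eq_adjugate_mulVec] using mul_cramer_comm_of_mulVec_eq_zero hu (Pi.single k 1) i j

lemma mul_adjugate_comm_of_vecMul_eq_zero (hw : w ᵥ* A = 0) (i j k : n) :
    w i * A.adjugate k j = w j * A.adjugate k i := by
  simpa [← adjugate_transpose] using
    mul_adjugate_comm_of_mulVec_eq_zero (A := Aᵀ) (by rwa [mulVec_transpose]) i j k

theorem dotProduct_smul_adjugate (hu : A *ᵥ u = 0) (hw : w ᵥ* A = 0) :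
    (w ⬝ᵥ u) • A.adjugate = A.adjugate.trace • vecMulVec u w := by
  ext j k
  simp only [Matrix.smul_apply, smul_eq_mul, vecMulVec_apply, dotProduct, trace, diag_apply,
    Finset.sum_mul]
  refine Finset.sum_congr rfl fun i _ ↦ ?_
  linear_combination w i * mul_adjugate_comm_of_mulVec_eq_zero hu i j k +
    u j * mul_adjugate_comm_of_vecMul_eq_zero hw i k i

lemma dotProduct_mul_trace_adjugate_mul (hu : A *ᵥ u = 0) (hw : w ᵥ* A = 0) (B : Matrix n n R) :
    (w ⬝ᵥ u) * (A.adjugate * B).trace = A.adjugate.trace * (w ⬝ᵥ B *ᵥ u) := by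
  rw [← smul_eq_mul, ← trace_smul, ← Matrix.smul_mul, dotProduct_smul_adjugate hu hw,
    Matrix.smul_mul, trace_smul, smul_eq_mul, vecMulVec_mul, trace_vecMulVec, dotProduct_comm,
    dotProduct_mulVec]

end Adjugate

section Eigenvalue

variable {𝕜 K R n : Type*} [Fintype n] [DecidableEq n]

lemma isRoot_charpoly_iff_det_sub_smul_one_eq_zero [CommRing R] {A : Matrix n n R} {c : R} :
    A.charpoly.IsRoot c ↔ (A - c • (1 : Matrix n n R)).det = 0 := by
  rw [Polynomial.IsRoot, eval_charpoly, ← neg_sub, det_neg, scalar_apply, smul_one_eq_diagonal,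
    ((isUnit_one.neg).pow _).mul_right_eq_zero]

lemma eval_derivative_ne_zero_of_rootMultiplicity_eq_one [CommRing R] {p : Polynomial R} {c : R}
    (hp : p.rootMultiplicity c = 1) : p.derivative.eval c ≠ 0 := by
  have hp0 : p ≠ 0 := by
    rintro rfl
    simp at hp
  have heval := Polynomial.eval_iterate_derivative_rootMultiplicity (p := p) (t := c)
  have hquot := Polynomial.eval_divByMonic_pow_rootMultiplicity_ne_zero c hp0
  rw [hp] at heval hquot
  rw [Function.iterate_one, Nat.factorial_one, one_smul] at heval
  rwa [heval]

theorem dotProduct_mul_deriv_eigenvalue [NontriviallyNormedField 𝕜] [NontriviallyNormedField K]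
    [NormedAlgebra 𝕜 K] {M : 𝕜 → Matrix n n K} {M' : Matrix n n K} {l : 𝕜 → K} {l' : K}
    {s : Set 𝕜} {t : 𝕜} {u w : n → K} (hs : UniqueDiffWithinAt 𝕜 s t) (ht : t ∈ s)
    (hM : ∀ i j, HasDerivWithinAt (fun x ↦ M x i j) (M' i j) s t)
    (hl : HasDerivWithinAt l l' s t) (hroot : ∀ x ∈ s, (M x).charpoly.IsRoot (l x))
    (hsimple : (M t).charpoly.rootMultiplicity (l t) = 1)
    (hu : M t *ᵥ u = l t • u) (hw : w ᵥ* M t = l t • w) :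
    (w ⬝ᵥ u) * l' = w ⬝ᵥ M' *ᵥ u := by
  have htrace : ((scalar n (l t) - M t).adjugate * (scalar n l' - M')).trace = 0 :=
    hs.eq_deriv s (hasDerivWithinAt_eval_charpoly hM hl)
      ((hasDerivWithinAt_const t s 0).congr hroot (hroot t ht))
  have hu' : (scalar n (l t) - M t) *ᵥ u = 0 := by
    simp [sub_mulVec, ← smul_one_eq_diagonal, smul_mulVec, hu]
  have hw' : w ᵥ* (scalar n (l t) - M t) = 0 := by
    simp [vecMul_sub, ← smul_one_eq_diagonal, vecMul_smul, hw]
  have hne : (scalar n (l t) - M t).adjugate.trace ≠ 0 := by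
    rw [← eval_derivative_charpoly]
    exact eval_derivative_ne_zero_of_rootMultiplicity_eq_one hsimple
  have hpair : w ⬝ᵥ (scalar n l' - M') *ᵥ u = 0 := by
    refine (mul_eq_zero.mp ?_).resolve_left hne
    rw [← dotProduct_mul_trace_adjugate_mul hu' hw', htrace, mul_zero]
  rw [sub_mulVec, dotProduct_sub, scalar_apply, ← smul_one_eq_diagonal, smul_mulVec, one_mulVec,
    dotProduct_smul, smul_eq_mul, sub_eq_zero] at hpair
  rw [mul_comm, hpair]

end Eigenvalue

lemma star_vecMul_eq_smul_of_isStarNormal {R n : Type*} [CommRing R] [PartialOrder R] [StarRing R]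
    [StarOrderedRing R] [NoZeroDivisors R] [Fintype n] {A : Matrix n n R}
    (hA : IsStarNormal A) {c : R} {u : n → R} (hu : A *ᵥ u = c • u) :
    star u ᵥ* A = c • star u := by
  classical
  have hB : (A - c • 1) *ᵥ u = 0 := by rw [sub_mulVec, smul_mulVec, one_mulVec, hu, sub_self]
  have hnormal : (A - c • 1)ᴴ * (A - c • 1) = (A - c • 1) * (A - c • 1)ᴴ := by
    have hscalar : Commute (star c • (1 : Matrix n n R)) (A - c • 1) :=
      (Commute.one_left _).smul_left _
    have hstar : Commute Aᴴ (A - c • 1) :=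
      hA.star_comm_self.sub_right ((Commute.one_right _).smul_right _)
    simpa using (hstar.sub_left hscalar).eq
  have hBH : (A - c • 1)ᴴ *ᵥ u = 0 := by
    rw [← self_mul_conjTranspose_mulVec_eq_zero, ← hnormal,
      conjTranspose_mul_self_mulVec_eq_zero, hB]
  have hstar := congrArg star hBH
  rwa [star_mulVec, conjTranspose_conjTranspose, star_zero, vecMul_sub, vecMul_smul, vecMul_one,
    sub_eq_zero] at hstar

lemma hasDerivWithinAt_mul_one_sub_smul {𝕜 n : Type*} [RCLike 𝕜] [Fintype n] [DecidableEq n]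
    (U P : Matrix n n 𝕜) {s : Set ℝ} {t : ℝ} (i j : n) :
    HasDerivWithinAt (fun x : ℝ ↦ (U * (1 - (1 - (x : 𝕜)) • P)) i j) ((U * P) i j) s t := by
  have hcoe : HasDerivWithinAt (fun x : ℝ ↦ 1 - (x : 𝕜)) (-1) s t := by
    simpa using ((RCLike.ofRealCLM (K := 𝕜)).hasDerivAt.const_sub (1 : 𝕜)).hasDerivWithinAt
  simpa [Matrix.mul_sub] using (hcoe.mul_const ((U * P) i j)).const_sub (U i j)

open scoped ComplexOrder in
theorem initial_velocity_general {𝕜 n : Type*} [RCLike 𝕜] [Fintype n] [DecidableEq n]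
    {U : Matrix n n 𝕜} (hU : IsStarNormal U) {u v : n → 𝕜} {s : Set ℝ}
    (hs : UniqueDiffWithinAt ℝ s 1) (h1 : (1 : ℝ) ∈ s) {l : ℝ → 𝕜} {d : 𝕜}
    (heig : U *ᵥ u = l 1 • u) (hsimple : U.charpoly.rootMultiplicity (l 1) = 1)
    (hroot : ∀ t ∈ s, (U * (1 - (1 - (t : 𝕜)) • vecMulVec v (star v))).charpoly.IsRoot (l t))
    (hd : HasDerivWithinAt l d s 1) :
    (star u ⬝ᵥ u) * d = l 1 * (‖star u ⬝ᵥ v‖ : 𝕜) ^ 2 := by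
  have hleft := star_vecMul_eq_smul_of_isStarNormal hU heig
  have hvu : star v ⬝ᵥ u = star (star u ⬝ᵥ v) := by rw [← star_dotProduct]
  calc (star u ⬝ᵥ u) * d = star u ⬝ᵥ (U * vecMulVec v (star v)) *ᵥ u :=
        dotProduct_mul_deriv_eigenvalue hs h1 (hasDerivWithinAt_mul_one_sub_smul U _) hd hroot
          (by simpa) (by simpa) (by simpa)
    _ = l 1 * ((star u ⬝ᵥ v) * star (star u ⬝ᵥ v)) := by
        rw [← mulVec_mulVec, dotProduct_mulVec, hleft, vecMulVec_mulVec, op_smul_eq_smul,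
          smul_dotProduct, dotProduct_smul, hvu, smul_eq_mul, smul_eq_mul, mul_comm (star _)]
    _ = l 1 * (‖star u ⬝ᵥ v‖ : 𝕜) ^ 2 := by rw [RCLike.star_def, RCLike.mul_conj]

lemma star_dotProduct_self_eq_sum_normSq {n : Type*} [Fintype n] (u : n → ℂ) :
    star u ⬝ᵥ u = (∑ i, Complex.normSq (u i) : ℝ) := by
  simp [dotProduct, Complex.normSq_eq_conj_mul_self]

/-- if `e^{iθ}` is a simple eigenvalue of `U` with unit eigenvector `u`, and
`λ : (1-η, 1] → ℂ` is an eigenvalue trajectory of `G(t)` with `λ(1) = e^{iθ}` that has a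
one-sided derivative `d` at `t = 1`, then `d = e^{iθ} |⟨u, v⟩|²`. -/
theorem initial_velocity {N : ℕ} (hN : 0 < N)
    (U : Matrix (Fin N) (Fin N) ℂ) (hU : U ∈ Matrix.unitaryGroup (Fin N) ℂ)
    (v : Fin N → ℂ) (hv : ∑ i, Complex.normSq (v i) = 1)
    (θ : ℝ) (u : Fin N → ℂ) (hu : ∑ i, Complex.normSq (u i) = 1)
    (heig : U *ᵥ u = Complex.exp ((θ : ℂ) * Complex.I) • u)
    (hsimple : (Matrix.charpoly U).rootMultiplicity (Complex.exp ((θ : ℂ) * Complex.I)) = 1)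
    (η : ℝ) (hη : 0 < η) (l : ℝ → ℂ)
    (hl1 : l 1 = Complex.exp ((θ : ℂ) * Complex.I))
    (hleig : ∀ t ∈ Set.Ioc (1 - η) (1 : ℝ),
      (Gpert U v t - l t • (1 : Matrix (Fin N) (Fin N) ℂ)).det = 0)
    (d : ℂ) (hd : HasDerivWithinAt l d (Set.Ioc (1 - η) (1 : ℝ)) 1) :
    d = Complex.exp ((θ : ℂ) * Complex.I)
        * (Complex.normSq (star u ⬝ᵥ v) : ℂ) := by
  have huu : star u ⬝ᵥ u = 1 := by
    rw [star_dotProduct_self_eq_sum_normSq, hu, Complex.ofReal_one]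
  have h1 : (1 : ℝ) ∈ Set.Ioc (1 - η) 1 := ⟨by linarith, le_rfl⟩
  have hvelocity : (star u ⬝ᵥ u) * d = l 1 * (‖star u ⬝ᵥ v‖ : ℂ) ^ 2 :=
    initial_velocity_general (isStarNormal_of_mem_unitary hU) (uniqueDiffOn_Ioc _ _ 1 h1) h1
      (hl1 ▸ heig) (hl1 ▸ hsimple)
      (fun t ht ↦ isRoot_charpoly_iff_det_sub_smul_one_eq_zero.mpr (hleig t ht)) hd
  rwa [huu, one_mul, hl1, ← Complex.ofReal_pow, ← Complex.normSq_eq_norm_sq] at hvelocity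

end
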